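/- arXiv:0903.1014 — 4 statements merged into one kernel-verified Lean document; each statement's English description precedes it below -/
import Mathlib

section
/- Fix q ≥ 1. Let L : ℝ × ℝ^q × ℝ^q → ℝ be a smooth Lagrangian in the variables (x,u,p) with u = (u¹,…,u^q) and p = (p¹,…,p^q), let η¹,…,η^q, R : ℝ × ℝ^q → ℝ be smooth functions of (x,u), and let λ : ℝ × ℝ^q × ℝ^q → ℝ be smooth. Define the truncated total derivative D_xF(x,u,p) = ∂_xF(x,u) + Σ_a p^a·∂_{u^a}F(x,u) for F a function of (x,u). Suppose that identically on ℝ × ℝ^q × ℝ^q: Σ_a η^a·∂_{u^a}L + Σ_a (D_xη^a + λ·η^a)·∂_{p^a}L = D_xR + λ·R. Define I(x,u,p) = Σ_a η^a(x,u)·∂_{p^a}L(x,u,p) − R(x,u). Then for every open interval J ⊆ ℝ and every twice differentiable u : J → ℝ^q solving the system of Euler-Lagrange equations d/dx[∂_{p^a}L(x,u(x),u'(x))] = ∂_{u^a}L(x,u(x),u'(x)) on J for each a = 1,…,q, the function φ(x) = I(x,u(x),u'(x)) satisfies φ'(x) = −λ(x,u(x),u'(x))·φ(x) for all x ∈ J.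 -/
open Finset in
/-- Truncated total derivative
`D_x F (x,u,p) = ∂_x F(x,u) + Σ_a p^a ∂_{u^a} F(x,u)` for `F` a function of `(x,u)`. -/
noncomputable def DxV {q : ℕ} (F : ℝ → (Fin q → ℝ) → ℝ) (x : ℝ) (u p : Fin q → ℝ) : ℝ :=
  deriv (fun t => F t u) x
    + ∑ a : Fin q, p a * deriv (fun s => F x (Function.update u a s)) (u a)

/-- Partial derivative of the Lagrangian with respect to `u^a`. -/
noncomputable def LuV {q : ℕ} (L : ℝ → (Fin q → ℝ) → (Fin q → ℝ) → ℝ) (a : Fin q)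
    (x : ℝ) (u p : Fin q → ℝ) : ℝ :=
  deriv (fun s => L x (Function.update u a s) p) (u a)

/-- Partial derivative of the Lagrangian with respect to `p^a`. -/
noncomputable def LpV {q : ℕ} (L : ℝ → (Fin q → ℝ) → (Fin q → ℝ) → ℝ) (a : Fin q)
    (x : ℝ) (u p : Fin q → ℝ) : ℝ :=
  deriv (fun s => L x u (Function.update p a s)) (p a)

/-- Chain rule: the truncated total derivative is the derivative along a curve. -/
theorem hasDerivAt_comp_curve_DxV {q : ℕ} {F : ℝ → (Fin q → ℝ) → ℝ} {u : ℝ → Fin q → ℝ}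
    {u' : Fin q → ℝ} {x : ℝ}
    (hF : DifferentiableAt ℝ (fun z : ℝ × (Fin q → ℝ) => F z.1 z.2) (x, u x))
    (hu : HasDerivAt u u' x) :
    HasDerivAt (fun t => F t (u t)) (DxV F x (u x) u') x := by
  set F' := fderiv ℝ (fun z : ℝ × (Fin q → ℝ) => F z.1 z.2) (x, u x)
  have hF' : HasFDerivAt (fun z : ℝ × (Fin q → ℝ) => F z.1 z.2) F' (x, u x) := hF.hasFDerivAt
  have hx : HasDerivAt (fun t => F t (u x)) (F' (1, 0)) x :=
    hF'.comp_hasDerivAt_of_eq x ((hasDerivAt_id x).prodMk (hasDerivAt_const x (u x))) rfl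
  have hv (a : Fin q) : HasDerivAt (fun s => F x (Function.update (u x) a s))
      (F' (0, Pi.single a 1)) (u x a) :=
    hF'.comp_hasDerivAt_of_eq (u x a)
      ((hasDerivAt_const (u x a) x).prodMk (hasDerivAt_update (u x) a (u x a))) (by simp)
  have htot : HasDerivAt (fun t => F t (u t)) (F' (1, u')) x :=
    hF'.comp_hasDerivAt_of_eq x ((hasDerivAt_id x).prodMk hu) rfl
  convert htot using 1
  have hsplit : ((1 : ℝ), u') = (1, 0) + ∑ a, u' a • ((0 : ℝ), (Pi.single a 1 : Fin q → ℝ)) := by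
    ext b <;> simp [Prod.fst_sum, Prod.snd_sum, Finset.sum_apply, Pi.single_apply]
  rw [hsplit, map_add, map_sum, DxV, hx.deriv]
  simp only [(hv _).deriv, map_smul, smul_eq_mul]

/-- The momentum partial derivative of a smooth Lagrangian is differentiable. -/
theorem differentiable_LpV {q : ℕ} {L : ℝ → (Fin q → ℝ) → (Fin q → ℝ) → ℝ}
    (hL : ContDiff ℝ 2 fun z : ℝ × (Fin q → ℝ) × (Fin q → ℝ) => L z.1 z.2.1 z.2.2)
    (a : Fin q) :
    Differentiable ℝ fun z : ℝ × (Fin q → ℝ) × (Fin q → ℝ) => LpV L a z.1 z.2.1 z.2.2 := by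
  have hfderiv : (fun z : ℝ × (Fin q → ℝ) × (Fin q → ℝ) => LpV L a z.1 z.2.1 z.2.2) =
      fun z => fderiv ℝ (fun z : ℝ × (Fin q → ℝ) × (Fin q → ℝ) => L z.1 z.2.1 z.2.2) z
        (0, 0, Pi.single a 1) := by
    funext ⟨x, v, p⟩
    exact (((hL.differentiable (by norm_num)) (x, v, p)).hasFDerivAt.comp_hasDerivAt_of_eq (p a)
      ((hasDerivAt_const (p a) x).prodMk
        ((hasDerivAt_const (p a) v).prodMk (hasDerivAt_update p a (p a)))) (by simp)).deriv
  rw [hfderiv]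
  exact ((hL.fderiv_right (m := 1) (by norm_num)).differentiable (by norm_num)).clm_apply
    (differentiable_const _)

/-- For a system of `q` Euler–Lagrange equations: if the vertical vector field `Σ_a η^a ∂_{u^a}`
is a divergence λ-variational symmetry of `L` with divergence term `R`, then along every solution
of the Euler–Lagrange system the function `φ(x) = I(x,u(x),u'(x))`, where
`I = Σ_a η^a ∂_{p^a}L − R`, satisfies `φ' = −λ φ`. -/
theorem lambda_variational_symmetry_noether_identity_systems
    (q : ℕ) (hq : 1 ≤ q)
    (L lam : ℝ → (Fin q → ℝ) → (Fin q → ℝ) → ℝ)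
    (η : Fin q → ℝ → (Fin q → ℝ) → ℝ) (R : ℝ → (Fin q → ℝ) → ℝ)
    (hL : ContDiff ℝ (⊤ : ℕ∞) fun z : ℝ × (Fin q → ℝ) × (Fin q → ℝ) => L z.1 z.2.1 z.2.2)
    (hη : ∀ a : Fin q, ContDiff ℝ (⊤ : ℕ∞) fun z : ℝ × (Fin q → ℝ) => η a z.1 z.2)
    (hR : ContDiff ℝ (⊤ : ℕ∞) fun z : ℝ × (Fin q → ℝ) => R z.1 z.2)
    (hlam : ContDiff ℝ (⊤ : ℕ∞) fun z : ℝ × (Fin q → ℝ) × (Fin q → ℝ) => lam z.1 z.2.1 z.2.2)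
    (hsym : ∀ (x : ℝ) (u p : Fin q → ℝ),
      (∑ a : Fin q, η a x u * LuV L a x u p)
        + (∑ a : Fin q, (DxV (η a) x u p + lam x u p * η a x u) * LpV L a x u p)
      = DxV R x u p + lam x u p * R x u)
    (J : Set ℝ) (hJopen : IsOpen J) (hJconn : J.OrdConnected)
    (u : ℝ → Fin q → ℝ)
    (hu1 : ∀ (a : Fin q), ∀ x ∈ J, DifferentiableAt ℝ (fun t => u t a) x)
    (hu2 : ∀ (a : Fin q), ∀ x ∈ J,
      DifferentiableAt ℝ (fun t => deriv (fun s => u s a) t) x)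
    (hEL : ∀ (a : Fin q), ∀ x ∈ J,
      deriv (fun t => LpV L a t (u t) (fun b => deriv (fun s => u s b) t)) x
        = LuV L a x (u x) (fun b => deriv (fun s => u s b) x)) :
    ∀ x ∈ J, HasDerivAt
      (fun t => (∑ a : Fin q, η a t (u t) * LpV L a t (u t) (fun b => deriv (fun s => u s b) t))
        - R t (u t))
      (-(lam x (u x) (fun b => deriv (fun s => u s b) x)) *
        ((∑ a : Fin q, η a x (u x) * LpV L a x (u x) (fun b => deriv (fun s => u s b) x))
          - R x (u x))) x := by
  intro x hx
  set p : ℝ → Fin q → ℝ := fun t b => deriv (fun s => u s b) t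
  have hu : HasDerivAt u (p x) x := hasDerivAt_pi.2 fun a => (hu1 a x hx).hasDerivAt
  have hp : DifferentiableAt ℝ p x := differentiableAt_pi.2 fun a => hu2 a x hx
  have hLp (a : Fin q) : HasDerivAt (fun t => LpV L a t (u t) (p t)) (LuV L a x (u x) (p x)) x := by
    rw [← hEL a x hx]
    have hcurve : DifferentiableAt ℝ (fun t => (t, u t, p t)) x :=
      differentiableAt_id.prodMk (hu.differentiableAt.prodMk hp)
    exact ((differentiable_LpV (contDiff_infty.1 hL 2) a
      (x, u x, p x)).comp x hcurve).hasDerivAt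
  have hη' (a : Fin q) : HasDerivAt (fun t => η a t (u t)) (DxV (η a) x (u x) (p x)) x :=
    hasDerivAt_comp_curve_DxV ((hη a).differentiable (by simp) _) hu
  have hR' : HasDerivAt (fun t => R t (u t)) (DxV R x (u x) (p x)) x :=
    hasDerivAt_comp_curve_DxV (hR.differentiable (by simp) _) hu
  refine ((HasDerivAt.fun_sum fun a _ => (hη' a).mul (hLp a)).sub hR').congr_deriv ?_
  have hs := hsym x (u x) (p x)
  simp only [add_mul, Finset.sum_add_distrib, mul_assoc, ← Finset.mul_sum] at hs ⊢
  linear_combination hs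
end

section
/- Let L : ℝ³ → ℝ be a smooth Lagrangian in the variables (x,u,p), let ξ, η, R : ℝ² → ℝ be smooth functions of (x,u), and let λ : ℝ³ → ℝ be a smooth function of (x,u,p). Define D_xF(x,u,p) = ∂_xF(x,u) + p·∂_uF(x,u), η₁ = D_xη − p·D_xξ + λ·(η − ξ·p), and suppose the divergence λ-variational symmetry condition ξ·∂_xL + η·∂_uL + η₁·∂_pL + L·(D_xξ + λ·ξ) = D_xR + λ·R holds identically on ℝ³. Define I(x,u,p) = ξ(x,u)·(L(x,u,p) − p·∂_pL(x,u,p)) + η(x,u)·∂_pL(x,u,p) − R(x,u). Let J ⊆ ℝ be an open interval, let u : J → ℝ be twice differentiable and solve the Euler-Lagrange equation d/dx[∂_pL(x,u(x),u'(x))] = ∂_uL(x,u(x),u'(x)) on J, and let w : J → ℝ be differentiable with w'(x) = λ(x,u(x),u'(x)) for all x ∈ J. Then the function x ↦ e^{w(x)}·I(x,u(x),u'(x)) is constant on J. -/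
/-- Truncated total derivative `D_x F (x,u,p) = ∂_x F(x,u) + p ∂_u F(x,u)`. -/
noncomputable def Dx (F : ℝ → ℝ → ℝ) (x u p : ℝ) : ℝ :=
  deriv (fun t => F t u) x + p * deriv (fun v => F x v) u

/-- Partial derivative of the Lagrangian with respect to `x`. -/
noncomputable def Lx (L : ℝ → ℝ → ℝ → ℝ) (x u p : ℝ) : ℝ := deriv (fun t => L t u p) x

/-- Partial derivative of the Lagrangian with respect to `u`. -/
noncomputable def Lu (L : ℝ → ℝ → ℝ → ℝ) (x u p : ℝ) : ℝ := deriv (fun v => L x v p) u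

/-- Partial derivative of the Lagrangian with respect to `p`. -/
noncomputable def Lp (L : ℝ → ℝ → ℝ → ℝ) (x u p : ℝ) : ℝ := deriv (fun q => L x u q) p

/-- First λ-prolonged coefficient `η₁ = D_x η − p D_x ξ + λ (η − ξ p)`. -/
noncomputable def eta1 (ξ η : ℝ → ℝ → ℝ) (lam : ℝ → ℝ → ℝ → ℝ) (x u p : ℝ) : ℝ :=
  Dx η x u p - p * Dx ξ x u p + lam x u p * (η x u - ξ x u * p)

/-- The Noether-type function `I = ξ (L − p ∂_p L) + η ∂_p L − R`. -/
noncomputable def NoetherI (L : ℝ → ℝ → ℝ → ℝ) (ξ η R : ℝ → ℝ → ℝ) (x u p : ℝ) : ℝ :=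
  ξ x u * (L x u p - p * Lp L x u p) + η x u * Lp L x u p - R x u

/-- Chain rule for a function of two real variables along the graph of `u`. -/
theorem hasDerivAt_comp_graph {F : ℝ → ℝ → ℝ}
    (hF : Differentiable ℝ fun z : ℝ × ℝ => F z.1 z.2) {u : ℝ → ℝ} {x u' : ℝ}
    (hu : HasDerivAt u u' x) :
    HasDerivAt (fun t => F t (u t)) (Dx F x (u x) u') x := by
  have h := (hF (x, u x)).hasFDerivAt
  have key := h.comp_hasDerivAt x ((hasDerivAt_id x).prodMk hu)
  have h1 := h.comp_hasDerivAt x ((hasDerivAt_id x).prodMk (hasDerivAt_const x (u x)))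
  have h2 := h.comp_hasDerivAt (u x) ((hasDerivAt_const (u x) x).prodMk (hasDerivAt_id (u x)))
  refine key.congr_deriv ?_
  unfold Dx
  erw [h1.deriv, h2.deriv]
  rw [← smul_eq_mul, ← map_smul, ← map_add]
  simp

/-- Chain rule for a function of three real variables along a curve `(t, u t, p t)`. -/
theorem hasDerivAt_comp_curve {L : ℝ → ℝ → ℝ → ℝ}
    (hL : Differentiable ℝ fun z : ℝ × ℝ × ℝ => L z.1 z.2.1 z.2.2) {u p : ℝ → ℝ} {x u' p' : ℝ}
    (hu : HasDerivAt u u' x) (hp : HasDerivAt p p' x) :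
    HasDerivAt (fun t => L t (u t) (p t))
      (Lx L x (u x) (p x) + u' * Lu L x (u x) (p x) + p' * Lp L x (u x) (p x)) x := by
  have h := (hL (x, u x, p x)).hasFDerivAt
  have key := h.comp_hasDerivAt x ((hasDerivAt_id x).prodMk (hu.prodMk hp))
  have h1 := h.comp_hasDerivAt x ((hasDerivAt_id x).prodMk
    ((hasDerivAt_const x (u x)).prodMk (hasDerivAt_const x (p x))))
  have h2 := h.comp_hasDerivAt (u x) ((hasDerivAt_const (u x) x).prodMk
    ((hasDerivAt_id (u x)).prodMk (hasDerivAt_const (u x) (p x))))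
  have h3 := h.comp_hasDerivAt (p x) ((hasDerivAt_const (p x) x).prodMk
    ((hasDerivAt_const (p x) (u x)).prodMk (hasDerivAt_id (p x))))
  refine key.congr_deriv ?_
  unfold Lx Lu Lp
  erw [h1.deriv, h2.deriv, h3.deriv]
  rw [← smul_eq_mul, ← smul_eq_mul, ← map_smul, ← map_smul, ← map_add, ← map_add]
  simp

/-- The momentum `∂_p L` of a `C²` Lagrangian is differentiable. -/
theorem differentiable_Lp {L : ℝ → ℝ → ℝ → ℝ}
    (hL : ContDiff ℝ 2 fun z : ℝ × ℝ × ℝ => L z.1 z.2.1 z.2.2) :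
    Differentiable ℝ fun z : ℝ × ℝ × ℝ => Lp L z.1 z.2.1 z.2.2 := by
  have heq : (fun z : ℝ × ℝ × ℝ => Lp L z.1 z.2.1 z.2.2) =
      fun z => fderiv ℝ (fun z : ℝ × ℝ × ℝ => L z.1 z.2.1 z.2.2) z (0, 0, 1) := by
    funext ⟨a, b, c⟩
    exact ((hL.differentiable (by norm_num) (a, b, c)).hasFDerivAt.comp_hasDerivAt c
      ((hasDerivAt_const c a).prodMk ((hasDerivAt_const c b).prodMk (hasDerivAt_id c)))).deriv
  rw [heq]
  have h : ContDiff ℝ 1 (fderiv ℝ fun z : ℝ × ℝ × ℝ => L z.1 z.2.1 z.2.2) :=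
    hL.fderiv_right (by norm_num)
  exact (h.differentiable (by norm_num)).clm_apply (differentiable_const _)

/-- Given a divergence λ-variational symmetry of `L`, the function `Ĩ = e^w · I` is a first
integral of the λ-covering system `{Euler–Lagrange equation, w' = λ}`: it is constant along every
solution `(u,w)` of the covering system. -/
theorem lambda_covering_first_integral
    (L lam : ℝ → ℝ → ℝ → ℝ) (ξ η R : ℝ → ℝ → ℝ)
    (hL : ContDiff ℝ (⊤ : ℕ∞) fun z : ℝ × ℝ × ℝ => L z.1 z.2.1 z.2.2)
    (hξ : ContDiff ℝ (⊤ : ℕ∞) fun z : ℝ × ℝ => ξ z.1 z.2)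
    (hη : ContDiff ℝ (⊤ : ℕ∞) fun z : ℝ × ℝ => η z.1 z.2)
    (hR : ContDiff ℝ (⊤ : ℕ∞) fun z : ℝ × ℝ => R z.1 z.2)
    (hlam : ContDiff ℝ (⊤ : ℕ∞) fun z : ℝ × ℝ × ℝ => lam z.1 z.2.1 z.2.2)
    (hsym : ∀ x u p : ℝ,
      ξ x u * Lx L x u p + η x u * Lu L x u p + eta1 ξ η lam x u p * Lp L x u p
        + L x u p * (Dx ξ x u p + lam x u p * ξ x u)
      = Dx R x u p + lam x u p * R x u)
    (J : Set ℝ) (hJopen : IsOpen J) (hJconn : J.OrdConnected)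
    (u w : ℝ → ℝ)
    (hu1 : ∀ x ∈ J, DifferentiableAt ℝ u x)
    (hu2 : ∀ x ∈ J, DifferentiableAt ℝ (deriv u) x)
    (hEL : ∀ x ∈ J,
      deriv (fun t => Lp L t (u t) (deriv u t)) x = Lu L x (u x) (deriv u x))
    (hw : ∀ x ∈ J, HasDerivAt w (lam x (u x) (deriv u x)) x) :
    ∀ x ∈ J, ∀ y ∈ J,
      Real.exp (w x) * NoetherI L ξ η R x (u x) (deriv u x)
        = Real.exp (w y) * NoetherI L ξ η R y (u y) (deriv u y) := by
  have hderiv : ∀ x ∈ J, HasDerivAt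
      (fun t => Real.exp (w t) * NoetherI L ξ η R t (u t) (deriv u t)) 0 x := by
    intro x hx
    have hu := (hu1 x hx).hasDerivAt
    have hp := (hu2 x hx).hasDerivAt
    have dL := hasDerivAt_comp_curve (hL.differentiable (by simp)) hu hp
    have dξ := hasDerivAt_comp_graph (hξ.differentiable (by simp)) hu
    have dη := hasDerivAt_comp_graph (hη.differentiable (by simp)) hu
    have dR := hasDerivAt_comp_graph (hR.differentiable (by simp)) hu
    have dLp : HasDerivAt (fun t => Lp L t (u t) (deriv u t)) (Lu L x (u x) (deriv u x)) x := by
      rw [← hEL x hx]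
      exact (hasDerivAt_comp_curve (differentiable_Lp (contDiff_infty.mp hL 2))
        hu hp).differentiableAt.hasDerivAt
    have dI := ((dξ.mul (dL.sub (hp.mul dLp))).add (dη.mul dLp)).sub dR
    refine ((hw x hx).exp.mul dI).congr_deriv ?_
    have hs := hsym x (u x) (deriv u x)
    unfold eta1 at hs
    simp only [Pi.add_apply, Pi.sub_apply, Pi.mul_apply]
    linear_combination Real.exp (w x) * hs
  intro x hx y hy
  exact hJopen.is_const_of_deriv_eq_zero hJconn.isPreconnected
    (fun t ht => (hderiv t ht).differentiableAt.differentiableWithinAt)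
    (fun t ht => (hderiv t ht).deriv) hx hy
end

section
/- Let J ⊆ ℝ be an open interval, let u : J → ℝ be twice differentiable with u(x) > 0 for all x ∈ J and u''(x) = x²·ln u(x)/u(x) − x²/u(x) + ln u(x) − 1 for all x ∈ J, and let w : J → ℝ be differentiable with w'(x) = x/u(x) for all x ∈ J. Then the function x ↦ e^{w(x)}·(u'(x) − x·ln u(x) + x) is constant on J. -/
/-- Along any solution `(u, w)` of the λ-covering system
`{u'' = x² ln u / u − x²/u + ln u − 1, w' = x/u}`, the function
`Ĩ = e^w (u' − x ln u + x)` is constant. -/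
theorem example_covering_first_integral
    (J : Set ℝ) (hJopen : IsOpen J) (hJconn : J.OrdConnected)
    (u w : ℝ → ℝ)
    (hu1 : ∀ x ∈ J, DifferentiableAt ℝ u x)
    (hu2 : ∀ x ∈ J, DifferentiableAt ℝ (deriv u) x)
    (hupos : ∀ x ∈ J, 0 < u x)
    (hode : ∀ x ∈ J, deriv (deriv u) x
      = x ^ 2 * Real.log (u x) / u x - x ^ 2 / u x + Real.log (u x) - 1)
    (hw : ∀ x ∈ J, HasDerivAt w (x / u x) x) :
    ∀ x ∈ J, ∀ y ∈ J,
      Real.exp (w x) * (deriv u x - x * Real.log (u x) + x)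
        = Real.exp (w y) * (deriv u y - y * Real.log (u y) + y) := by
  have hderiv : ∀ x ∈ J, HasDerivAt
      (fun t => Real.exp (w t) * (deriv u t - t * Real.log (u t) + t)) 0 x := by
    intro x hx
    have hne : u x ≠ 0 := (hupos x hx).ne'
    have hlog := (hu1 x hx).hasDerivAt.log hne
    have hu' := (hu2 x hx).hasDerivAt
    rw [hode x hx] at hu'
    refine ((hw x hx).exp.mul
      ((hu'.sub ((hasDerivAt_id' x).mul hlog)).add (hasDerivAt_id' x))).congr_deriv ?_
    simp only [Pi.add_apply, Pi.sub_apply, Pi.mul_apply]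
    field_simp
    ring
  intro x hx y hy
  exact hJopen.is_const_of_deriv_eq_zero hJconn.isPreconnected
    (fun t ht => (hderiv t ht).differentiableAt.differentiableWithinAt)
    (fun t ht => (hderiv t ht).deriv) hx hy
end

section
/- Let J ⊆ ℝ be an open interval and let u : J → ℝ be twice differentiable with continuous derivative, with u(x) > 0 for all x ∈ J, satisfying u''(x) = x²·ln u(x)/u(x) − x²/u(x) + ln u(x) − 1 for all x ∈ J. If u'(x₀) = x₀·ln u(x₀) − x₀ for some x₀ ∈ J, then u'(x) = x·ln u(x) − x for all x ∈ J. -/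
/-- A solution of the homogeneous linear equation `y' = a y` on an open interval that vanishes
at one point vanishes identically. -/
theorem eq_zero_of_hasDerivAt_mul_self {J : Set ℝ} (hJ : IsOpen J) (hJc : J.OrdConnected)
    {a y : ℝ → ℝ} (ha : ContinuousOn a J) (hy : ∀ x ∈ J, HasDerivAt y (a x * y x) x)
    {x₀ : ℝ} (hx₀ : x₀ ∈ J) (hy₀ : y x₀ = 0) {x : ℝ} (hx : x ∈ J) : y x = 0 := by
  have hA : ∀ t ∈ J, HasDerivAt (fun s => ∫ r in x₀..s, a r) (a t) t := fun t ht =>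
    intervalIntegral.integral_hasDerivAt_right
      (ha.mono (hJc.uIcc_subset hx₀ ht)).intervalIntegrable
      (ha.stronglyMeasurableAtFilter hJ t ht) (ha.continuousAt (hJ.mem_nhds ht))
  have hF : ∀ t ∈ J, HasDerivAt (fun s => Real.exp (-∫ r in x₀..s, a r) * y s) 0 t := by
    intro t ht
    refine ((hA t ht).fun_neg.exp.fun_mul (hy t ht)).congr_deriv ?_
    ring
  have hconst := hJ.is_const_of_deriv_eq_zero hJc.isPreconnected
    (fun t ht => (hF t ht).differentiableAt.differentiableWithinAt)
    (fun t ht => (hF t ht).deriv) hx hx₀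
  simpa [hy₀] using hconst

/-- Conditional reduction for the example: if a positive solution of
`u'' = x² ln u / u − x²/u + ln u − 1` (twice differentiable with continuous derivative)
satisfies `u'(x₀) = x₀ ln u(x₀) − x₀` at a single point `x₀`, then it satisfies the reduced
first-order equation `u' = x ln u − x` on the whole interval. -/
theorem example_conditional_reduction
    (J : Set ℝ) (hJopen : IsOpen J) (hJconn : J.OrdConnected)
    (u : ℝ → ℝ)
    (hu1 : ∀ x ∈ J, DifferentiableAt ℝ u x)
    (hu2 : ∀ x ∈ J, DifferentiableAt ℝ (deriv u) x)
    (hu2c : ContinuousOn (deriv u) J)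
    (hupos : ∀ x ∈ J, 0 < u x)
    (hode : ∀ x ∈ J, deriv (deriv u) x
      = x ^ 2 * Real.log (u x) / u x - x ^ 2 / u x + Real.log (u x) - 1)
    (x₀ : ℝ) (hx₀ : x₀ ∈ J)
    (hI₀ : deriv u x₀ = x₀ * Real.log (u x₀) - x₀) :
    ∀ x ∈ J, deriv u x = x * Real.log (u x) - x := by
  intro x hx
  have hI : ∀ t ∈ J, HasDerivAt (fun s => deriv u s - (s * Real.log (u s) - s))
      (-(t / u t) * (deriv u t - (t * Real.log (u t) - t))) t := by
    intro t ht
    have hne := (hupos t ht).ne'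
    have hlog := (hu1 t ht).hasDerivAt.log hne
    refine ((hu2 t ht).hasDerivAt.fun_sub
      (((hasDerivAt_id' t).fun_mul hlog).fun_sub (hasDerivAt_id' t))).congr_deriv ?_
    rw [hode t ht]
    field_simp
    ring
  have ha : ContinuousOn (fun t => -(t / u t)) J :=
    (continuousOn_id.div (fun t ht => (hu1 t ht).continuousAt.continuousWithinAt)
      fun t ht => (hupos t ht).ne').neg
  exact sub_eq_zero.mp
    (eq_zero_of_hasDerivAt_mul_self hJopen hJconn ha hI hx₀ (sub_eq_zero.mpr hI₀) hx)
end
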